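/- Let P be an n×n irreducible row-stochastic matrix with stationary distribution d ∈ ℝ^n having strictly positive entries, let d_μ ∈ ℝ^n be a probability vector with strictly positive entries, D := diag(d_μ), and λ > 0. Let X be an n×K real matrix with linearly independent columns, set A := Xᵀ(I − Pᵀ)DX, C := XᵀDX, b := Xᵀd_μ, and τ* := D^{-1}d. Assume: (i) there exists w_* ∈ ℝ^K with Xw_* = τ*; (ii) XC^{-1}Xᵀ is positive definite; and (iii) the orthogonal projection of b onto the kernel of AᵀC^{-1}A is nonzero. Then, as ξ → 0⁺, the regularized solutions w_{∞,ξ} := (AᵀC^{-1}A + λ b bᵀ + ξI)^{-1}(λ b) converge to w_*. -/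

import Mathlib

open Matrix

/-!
By Perron–Frobenius, the solutions of `(I - Pᵀ)Dτ = 0` are the multiples of the density ratio
`τ* = d / dμ`, and `⟨dμ, τ*⟩ = 1` singles out the normalization. With `L := (I - Pᵀ)DX` we have
`A = XᵀL`, so `AᵀC⁻¹A = Lᵀ(XC⁻¹Xᵀ)L` has the same kernel as `L`, namely the line through `w_*`, and
`⟨b, w_*⟩ = ⟨dμ, τ*⟩ = 1`. The rank-one term `λ b bᵀ` therefore makes the matrix nonsingular, and
`w_*` solves the unregularized system. Continuity of the matrix inverse then gives the limit.
-/

open Filter Topology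

section Perron

theorem pow_mulVec_eq_pow_smul {ι R : Type*} [Fintype ι] [DecidableEq ι] [CommSemiring R]
    {A : Matrix ι ι R} {r : R} {x : ι → R} (hx : A *ᵥ x = r • x) (k : ℕ) :
    (A ^ k) *ᵥ x = r ^ k • x := by
  induction k with
  | zero => simp
  | succ k ih => rw [pow_succ, ← mulVec_mulVec, hx, mulVec_smul, ih, smul_smul, pow_succ']

variable {ι R : Type*} [Fintype ι] [Field R] [LinearOrder R] [IsStrictOrderedRing R]
  {A : Matrix ι ι R} {r : R} {x d : ι → R}

theorem eq_zero_of_mulVec_eq_smul_of_nonneg (hA : A.IsIrreducible) (hx : A *ᵥ x = r • x)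
    (hx_nonneg : 0 ≤ x) {i : ι} (hi : x i = 0) : x = 0 := by
  classical
  funext j
  obtain ⟨k, -, hk⟩ := (isIrreducible_iff_exists_pow_pos hA.nonneg).1 hA i j
  have hsum : ∑ l, (A ^ k) i l * x l = 0 := by
    simpa [mulVec, dotProduct, hi] using congrFun (pow_mulVec_eq_pow_smul hx k) i
  have hterm : (A ^ k) i j * x j = 0 :=
    (Finset.sum_eq_zero_iff_of_nonneg fun l _ =>
      mul_nonneg (pow_apply_nonneg hA.nonneg k i l) (hx_nonneg l)).1 hsum j (Finset.mem_univ j)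
  exact (mul_eq_zero.1 hterm).resolve_left hk.ne'

theorem exists_eq_smul_of_mulVec_eq_smul (hA : A.IsIrreducible) (hd_pos : ∀ i, 0 < d i)
    (hd : A *ᵥ d = r • d) (hx : A *ᵥ x = r • x) : ∃ c : R, x = c • d := by
  cases isEmpty_or_nonempty ι
  · exact ⟨0, Subsingleton.elim _ _⟩
  obtain ⟨i, hi⟩ := Finite.exists_min fun i => x i / d i
  -- the largest multiple of `d` below `x` touches `x` at the index `i`
  refine ⟨x i / d i, sub_eq_zero.1 <|
    eq_zero_of_mulVec_eq_smul_of_nonneg (r := r) (i := i) hA ?_ (fun j => ?_) ?_⟩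
  · rw [mulVec_sub, mulVec_smul, hx, hd, smul_comm, smul_sub]
  · simpa using (le_div_iff₀ (hd_pos j)).1 (hi j)
  · simp [(hd_pos i).ne']

end Perron

section DensityRatio

/-- The matrix `(I - Pᵀ)D`, with `D = diag(dμ)`, of the undiscounted flow equation `Dτ = PᵀDτ` for a
density ratio `τ` with respect to `dμ`. -/
def flowMatrix {ι R : Type*} [Fintype ι] [DecidableEq ι] [Ring R] (P : Matrix ι ι R)
    (dμ : ι → R) : Matrix ι ι R :=
  (1 - Pᵀ) * diagonal dμ

theorem flowMatrix_mulVec_eq_zero_iff {ι R : Type*} [Fintype ι] [DecidableEq ι] [Ring R]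
    {P : Matrix ι ι R} {dμ τ : ι → R} :
    flowMatrix P dμ *ᵥ τ = 0 ↔ Pᵀ *ᵥ (diagonal dμ *ᵥ τ) = diagonal dμ *ᵥ τ := by
  rw [flowMatrix, ← mulVec_mulVec, sub_mulVec, one_mulVec, sub_eq_zero, eq_comm]

variable {ι R : Type*} [Fintype ι] [Field R] {P : Matrix ι ι R} {d dμ τ : ι → R}

theorem dotProduct_div_eq_sum (hdμ : ∀ i, dμ i ≠ 0) : dμ ⬝ᵥ (d / dμ) = ∑ i, d i :=
  Finset.sum_congr rfl fun i _ => mul_div_cancel₀ (d i) (hdμ i)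

variable [DecidableEq ι]

theorem flowMatrix_mulVec_div (hdμ : ∀ i, dμ i ≠ 0) (hd : Pᵀ *ᵥ d = d) :
    flowMatrix P dμ *ᵥ (d / dμ) = 0 := by
  have hDτ : diagonal dμ *ᵥ (d / dμ) = d := by
    funext i
    rw [mulVec_diagonal, Pi.div_apply, mul_div_cancel₀ _ (hdμ i)]
  rw [flowMatrix_mulVec_eq_zero_iff, hDτ, hd]

theorem exists_eq_smul_div_of_flowMatrix_mulVec_eq_zero [LinearOrder R] [IsStrictOrderedRing R]
    (hP : P.IsIrreducible) (hd_pos : ∀ i, 0 < d i) (hd : Pᵀ *ᵥ d = d) (hdμ : ∀ i, dμ i ≠ 0)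
    (hτ : flowMatrix P dμ *ᵥ τ = 0) : ∃ c : R, τ = c • (d / dμ) := by
  obtain ⟨c, hc⟩ : ∃ c : R, diagonal dμ *ᵥ τ = c • d :=
    exists_eq_smul_of_mulVec_eq_smul (r := 1) hP.transpose hd_pos (by rwa [one_smul])
      (by rwa [one_smul, ← flowMatrix_mulVec_eq_zero_iff])
  refine ⟨c, funext fun i => ?_⟩
  have hci : dμ i * τ i = c * d i := by simpa [mulVec_diagonal] using congrFun hc i
  rw [Pi.smul_apply, Pi.div_apply, smul_eq_mul, ← mul_div_assoc, ← hci,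
    mul_div_cancel_left₀ _ (hdμ i)]

theorem eq_zero_of_flowMatrix_mulVec_eq_zero [LinearOrder R] [IsStrictOrderedRing R]
    (hP : P.IsIrreducible) (hd_pos : ∀ i, 0 < d i) (hd_sum : ∑ i, d i ≠ 0) (hd : Pᵀ *ᵥ d = d)
    (hdμ : ∀ i, dμ i ≠ 0) (hτ : flowMatrix P dμ *ᵥ τ = 0) (hτ_dot : dμ ⬝ᵥ τ = 0) : τ = 0 := by
  obtain ⟨c, rfl⟩ := exists_eq_smul_div_of_flowMatrix_mulVec_eq_zero hP hd_pos hd hdμ hτ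
  have hc : c = 0 := by
    simpa [dotProduct_smul, dotProduct_div_eq_sum hdμ, hd_sum] using hτ_dot
  rw [hc, zero_smul]

end DensityRatio

section Nonsingular

theorem conjTranspose_mul_mul_mulVec_eq_zero_iff {ι κ R : Type*} [Fintype ι] [Fintype κ]
    [Ring R] [PartialOrder R] [StarRing R] {S : Matrix ι ι R} (hS : S.PosDef)
    (L : Matrix ι κ R) (v : κ → R) : (Lᴴ * S * L) *ᵥ v = 0 ↔ L *ᵥ v = 0 := by
  refine ⟨fun hv => ?_, fun hv => by rw [← mulVec_mulVec, hv, mulVec_zero]⟩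
  by_contra hLv
  have hquad : star (L *ᵥ v) ⬝ᵥ (S *ᵥ (L *ᵥ v)) = star v ⬝ᵥ ((Lᴴ * S * L) *ᵥ v) := by
    rw [star_mulVec, ← dotProduct_mulVec, mulVec_mulVec, mulVec_mulVec, Matrix.mul_assoc]
  have hpos := hS.dotProduct_mulVec_pos hLv
  rw [hquad, hv, dotProduct_zero] at hpos
  exact hpos.false

theorem isUnit_add_smul_vecMulVec {κ F : Type*} [Fintype κ] [DecidableEq κ] [Field F]
    {N : Matrix κ κ F} {a b u : κ → F} {c : F} (hc : c ≠ 0) (hu : u ᵥ* N = 0)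
    (hua : u ⬝ᵥ a ≠ 0) (hker : ∀ v, N *ᵥ v = 0 → b ⬝ᵥ v = 0 → v = 0) :
    IsUnit (N + c • vecMulVec a b) := by
  rw [isUnit_iff_isUnit_det, isUnit_iff_ne_zero, Ne, ← exists_mulVec_eq_zero_iff]
  rintro ⟨v, hv_ne, hv⟩
  have hsplit : N *ᵥ v + (c * (b ⬝ᵥ v)) • a = 0 := by
    simpa [add_mulVec, smul_mulVec, vecMulVec_mulVec, smul_smul] using hv
  -- pairing with the left null vector `u` isolates the rank-one term
  have hbv : b ⬝ᵥ v = 0 := by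
    have hpair := congrArg (u ⬝ᵥ ·) hsplit
    simpa [dotProduct_add, dotProduct_mulVec, hu, hc, hua] using hpair
  exact hv_ne (hker v (by simpa [hbv] using hsplit) hbv)

end Nonsingular

section Limit

variable {κ F : Type*} [Fintype κ] [DecidableEq κ] [Field F] [TopologicalSpace F]
  [IsTopologicalDivisionRing F]

theorem tendsto_inv_mulVec {α : Type*} {l : Filter α} {f : α → Matrix κ κ F} {M : Matrix κ κ F}
    {w v : κ → F} (hf : Tendsto f l (𝓝 M)) (hM : IsUnit M) (hw : M *ᵥ w = v) :
    Tendsto (fun x => (f x)⁻¹ *ᵥ v) l (𝓝 w) := by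
  have hdet : IsUnit M.det := (isUnit_iff_isUnit_det M).1 hM
  have hinv : Tendsto (fun x => (f x)⁻¹) l (𝓝 M⁻¹) :=
    (continuousAt_matrix_inv M <| by
      simpa only [Ring.inverse_eq_inv'] using continuousAt_inv₀ hdet.ne_zero).tendsto.comp hf
  have hmulVec : Continuous fun B : Matrix κ κ F => B *ᵥ v :=
    continuous_id.matrix_mulVec continuous_const
  have hsol : M⁻¹ *ᵥ v = w := by rw [← hw, mulVec_mulVec, nonsing_inv_mul M hdet, one_mulVec]
  simpa only [hsol, Function.comp_def] using (hmulVec.tendsto M⁻¹).comp hinv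

theorem tendsto_inv_add_smul_vecMulVec_add_smul_one_mulVec {N : Matrix κ κ F} {a b u w : κ → F}
    {c : F} (hc : c ≠ 0) (hu : u ᵥ* N = 0) (hua : u ⬝ᵥ a ≠ 0) (hw : N *ᵥ w = 0)
    (hbw : b ⬝ᵥ w = 1) (hker : ∀ v, N *ᵥ v = 0 → b ⬝ᵥ v = 0 → v = 0) :
    Tendsto (fun ξ : F => (N + c • vecMulVec a b + ξ • (1 : Matrix κ κ F))⁻¹ *ᵥ (c • a))
      (𝓝 0) (𝓝 w) := by
  have hcont : Continuous fun ξ : F => N + c • vecMulVec a b + ξ • (1 : Matrix κ κ F) := by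
    fun_prop
  have hsol : (N + c • vecMulVec a b) *ᵥ w = c • a := by
    simp [add_mulVec, smul_mulVec, vecMulVec_mulVec, hw, hbw]
  exact tendsto_inv_mulVec (hcont.tendsto' 0 _ (by rw [zero_smul, add_zero]))
    (isUnit_add_smul_vecMulVec hc hu hua hker) hsol

end Limit

-- `G` plays the role of `C⁻¹`.
theorem stmt14_general {ι κ : Type*} [Fintype ι] [DecidableEq ι] [Fintype κ] [DecidableEq κ]
    {P : Matrix ι ι ℝ} (hP : P.IsIrreducible) {d : ι → ℝ} (hd_pos : ∀ i, 0 < d i)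
    (hd_sum : ∑ i, d i = 1) (hd : Pᵀ *ᵥ d = d) {dμ : ι → ℝ} (hdμ : ∀ i, dμ i ≠ 0)
    {lam : ℝ} (hlam : lam ≠ 0) {X : Matrix ι κ ℝ} (hX : LinearIndependent ℝ Xᵀ)
    {A G : Matrix κ κ ℝ} {b : κ → ℝ} (hA : A = Xᵀ * (1 - Pᵀ) * diagonal dμ * X)
    (hb : b = Xᵀ *ᵥ dμ) {w : κ → ℝ} (hw : X *ᵥ w = d / dμ) (hG : (X * G * Xᵀ).PosDef) :
    Tendsto
      (fun ξ : ℝ =>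
        (Aᵀ * G * A + lam • vecMulVec b b + ξ • (1 : Matrix κ κ ℝ))⁻¹ *ᵥ (lam • b))
      (𝓝 0) (𝓝 w) := by
  set L := flowMatrix P dμ * X with hL
  have hfactor : Aᵀ * G * A = Lᵀ * (X * G * Xᵀ) * L := by
    have hAL : A = Xᵀ * L := by simp only [hA, hL, flowMatrix, Matrix.mul_assoc]
    rw [hAL, transpose_mul, transpose_transpose]
    simp only [Matrix.mul_assoc]
  have hLw : L *ᵥ w = 0 := by rw [← mulVec_mulVec, hw, flowMatrix_mulVec_div hdμ hd]
  have hb_dot (v : κ → ℝ) : b ⬝ᵥ v = dμ ⬝ᵥ (X *ᵥ v) := by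
    rw [hb, mulVec_transpose, ← dotProduct_mulVec]
  have hbw : b ⬝ᵥ w = 1 := by rw [hb_dot, hw, dotProduct_div_eq_sum hdμ, hd_sum]
  have hker (v : κ → ℝ) (hv : (Aᵀ * G * A) *ᵥ v = 0) (hbv : b ⬝ᵥ v = 0) : v = 0 := by
    rw [hfactor, ← conjTranspose_eq_transpose_of_trivial,
      conjTranspose_mul_mul_mulVec_eq_zero_iff hG, ← mulVec_mulVec] at hv
    have hXv : X *ᵥ v = 0 :=
      eq_zero_of_flowMatrix_mulVec_eq_zero hP hd_pos (hd_sum.trans_ne one_ne_zero) hd hdμ hv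
        (by rw [← hb_dot, hbv])
    exact mulVec_injective_iff.2 hX (hXv.trans (mulVec_zero X).symm)
  refine tendsto_inv_add_smul_vecMulVec_add_smul_one_mulVec (u := w) hlam ?_ ?_ ?_ hbw hker
  · rw [hfactor, Matrix.mul_assoc, ← vecMul_vecMul, vecMul_transpose, hLw, zero_vecMul]
  · exact ((dotProduct_comm w b).trans hbw).trans_ne one_ne_zero
  · rw [hfactor, ← mulVec_mulVec, hLw, mulVec_zero]

/-- Regularization-path consistency of GradientDICE in the
average-reward case `γ = 1`. With `A := Xᵀ(I - Pᵀ)DX`, `C := XᵀDX`,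
`b := Xᵀd_μ`, `τ* := D⁻¹d`, assuming (i) `τ* = Xw_*` is realizable,
(ii) `XC⁻¹Xᵀ` is positive definite, and (iii) the orthogonal projection of `b`
onto the kernel of `AᵀC⁻¹A` is nonzero (i.e. some kernel vector is not
orthogonal to `b`), the regularized solutions
`w_{∞,ξ} := (AᵀC⁻¹A + λ b bᵀ + ξI)⁻¹(λb)` converge to `w_*` as `ξ → 0⁺`. -/
theorem stmt14 {n K : ℕ} (hn : 1 ≤ n) (hK : 1 ≤ K)
    (P : Matrix (Fin n) (Fin n) ℝ)
    (hP_nonneg : ∀ i j, 0 ≤ P i j) (hP_row : ∀ i, ∑ j, P i j = 1)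
    (hP_irred : ∀ i j, ∃ k : ℕ, 1 ≤ k ∧ 0 < (P ^ k) i j)
    (d : Fin n → ℝ) (hd_pos : ∀ i, 0 < d i) (hd_sum : ∑ i, d i = 1)
    (hd_stat : P.transpose.mulVec d = d)
    (dμ : Fin n → ℝ) (hdμ_pos : ∀ i, 0 < dμ i) (hdμ_sum : ∑ i, dμ i = 1)
    (lam : ℝ) (hlam : 0 < lam)
    (X : Matrix (Fin n) (Fin K) ℝ) (hX : LinearIndependent ℝ X.transpose)
    (A C : Matrix (Fin K) (Fin K) ℝ) (b : Fin K → ℝ)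
    (hA : A = X.transpose * ((1 : Matrix (Fin n) (Fin n) ℝ) - P.transpose)
        * Matrix.diagonal dμ * X)
    (hC : C = X.transpose * Matrix.diagonal dμ * X)
    (hb : b = X.transpose.mulVec dμ)
    (wstar : Fin K → ℝ) (hwstar : X.mulVec wstar = fun i => d i / dμ i)
    (hXCX : (X * C⁻¹ * X.transpose).PosDef)
    (hker : ∃ v : Fin K → ℝ, (A.transpose * C⁻¹ * A).mulVec v = 0 ∧ v ⬝ᵥ b ≠ 0) :
    Filter.Tendsto
      (fun ξ : ℝ => (A.transpose * C⁻¹ * A + lam • (Matrix.of fun i j => b i * b j)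
          + ξ • (1 : Matrix (Fin K) (Fin K) ℝ))⁻¹.mulVec (lam • b))
      (nhdsWithin 0 (Set.Ioi 0)) (nhds wstar) := by
  have hP := (isIrreducible_iff_exists_pow_pos hP_nonneg).2 hP_irred
  exact (stmt14_general hP hd_pos hd_sum hd_stat (fun i => (hdμ_pos i).ne') hlam.ne' hX hA hb
    hwstar hXCX).mono_left nhdsWithin_le_nhds
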